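/- Let c ∈ V be controllable. Then: (i) every equivalence class 𝒯_i^c of neighbors of c is jointly controllable; and (ii) for every equivalence class 𝒯_i^c and every jointly controllable set A ⊆ V, the three sets A ∩ 𝒯_i^c, A \ 𝒯_i^c and 𝒯_i^c \ A are jointly controllable. -/

import Mathlib

/-!
Write `x_v = q_c - q_v + δ_v`, where `δ_v` is the shift that makes `V''_{cv}` adjusted (no term of
second-highest degree), so that two neighbors of `c` are equivalent iff their adjusted polynomials
coincide (`polyEquiv_iff_adjRep_eq`). To a family `F = (F_v)` of real polynomials with `F_c = 0`
associate the field `vf F = ∑_v F_v(x_v) ∂_{p_v}`, and let `L` (`reach`) be the space of those `F`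
with `vf F ∈ 𝓜`. Three bracket computations drive the proof:

* `[∂_{q_c}, X₀]` is, up to a multiple of `∂_{p_c}`, the field of the family `f` of adjusted
  polynomials (zero off the neighbors of `c`), so `f ∈ L`;
* `[∂_{q_c}, vf F] = vf F'`, so `L` is stable under `F ↦ F'`;
* `[[vf F, X₀], vf H] = -vf (F H)'`, so `L` is stable under `(F, H) ↦ (F H)'`.

The rest is algebra (`ClosedFamily`). Let `S` be the set of `a : V → ℝ` with `(a_v X)_v ∈ L`. For
`a ∈ S` and `g ∈ L`, the family `(a_v X g_v)'` lies in `L`; its degree `j` coefficients are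
`a_v (j + 1)` times those of `g`. Iterating and interpolating, any function of `a_v (j + 1)` may be
used as a multiplier of the coefficients (`multiplier_mem`). Hence `S` is closed under products and
under `a ↦ φ ∘ a` for `φ 0 = 0`, and when `S` contains the indicator of a set `K`, both the
restriction to `K` and each homogeneous part of that restriction stay in `L`.

By descending induction on `n`, the indicator of `{v | deg f_v > n}` lies in `S`: once the higher
degrees have been subtracted from `f`, the `n`-th derivative is `b_v X + e_v` with `b_v e_v = 0`
(this is where adjustedness enters), and the derivative of its square is `2 b_v² X`. So the
indicator of each degree set lies in `S`. On such a set all positive-degree coefficients of `f`, and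
the product of the leading and the constant coefficient, belong to `S`; intersecting level sets
gives the indicator of each equivalence class (`eq_indicator_mem`).

Differentiating `1_K X` gives (i). For (ii), the product rule applied to `1_K X` and the constant
family `1_{A \ {c}}` yields `A ∩ K`, and the two differences follow by subtraction.
-/

open scoped Classical
open Polynomial

noncomputable section

/-- Phase space ℝ^{2|V|}: positions `q = x.1` and momenta `p = x.2`. -/
abbrev Phase (V : Type) := (V → ℝ) × (V → ℝ)

/-- Lie bracket of vector fields: `[Y,Z](x) = DZ(x)·Y(x) − DY(x)·Z(x)`. -/
def lieB {V : Type} [Fintype V] (Y Z : Phase V → Phase V) : Phase V → Phase V :=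
  fun x => fderiv ℝ Z x (Y x) - fderiv ℝ Y x (Z x)

/-- The constant vector field `∂_{p_v}`. -/
def dp {V : Type} [Fintype V] [DecidableEq V] (v : V) : Phase V → Phase V :=
  fun _ => (0, Pi.single v 1)

/-- The constant vector field `∂_{q_v}`. -/
def dq {V : Type} [Fintype V] [DecidableEq V] (v : V) : Phase V → Phase V :=
  fun _ => (Pi.single v 1, 0)

/-- The constant vector field `∑_{v ∈ A} ∂_{p_v}`. -/
def dpSum {V : Type} [Fintype V] [DecidableEq V] (A : Finset V) : Phase V → Phase V :=
  fun _ => (0, ∑ v ∈ A, Pi.single v 1)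

/-- The constant vector field `∑_{v ∈ A} ∂_{q_v}`. -/
def dqSum {V : Type} [Fintype V] [DecidableEq V] (A : Finset V) : Phase V → Phase V :=
  fun _ => (∑ v ∈ A, Pi.single v 1, 0)

/-- The drift vector field
`X₀ = −∑_{v∈V*} γ_v p_v ∂_{p_v} + ∑_{v∈V} (p_v ∂_{q_v} − U_v'(q_v) ∂_{p_v})
      − ∑_{{u,v}∈E} V_{uv}'(q_u − q_v)(∂_{p_u} − ∂_{p_v})`,
written componentwise (using the symmetry `V_{vu}(x) = V_{uv}(−x)` of the
interaction potentials, the `∂_{p_v}`-component of the edge term at a vertex `v` is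
`−∑_{w ~ v} V_{vw}'(q_v − q_w)`). -/
def X0 {V : Type} [Fintype V] [DecidableEq V] (G : SimpleGraph V) [DecidableRel G.Adj]
    (γ : V → ℝ) (U : V → ℝ → ℝ) (Vp : V → V → Polynomial ℝ) : Phase V → Phase V :=
  fun x =>
    (x.2, fun v =>
      -(γ v) * x.2 v - deriv (U v) (x.1 v) -
        ∑ w ∈ Finset.univ.filter (fun w => G.Adj v w),
          (derivative (Vp v w)).eval (x.1 v - x.1 w))

/-- The smallest collection `𝓜` of vector fields on `ℝ^{2|V|}` that contains `∂_{p_v}`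
for every `v ∈ V*`, and is closed under linear combinations, Lie brackets,
bracketing with `X₀`, and multiplication by smooth scalar functions. -/
inductive MM {V : Type} [Fintype V] [DecidableEq V] (Vstar : Finset V)
    (X₀ : Phase V → Phase V) : (Phase V → Phase V) → Prop
  | basic (v : V) (hv : v ∈ Vstar) : MM Vstar X₀ (dp v)
  | add {Y Z : Phase V → Phase V} : MM Vstar X₀ Y → MM Vstar X₀ Z → MM Vstar X₀ (Y + Z)
  | smul (a : ℝ) {Y : Phase V → Phase V} : MM Vstar X₀ Y → MM Vstar X₀ (a • Y)
  | lie {Y Z : Phase V → Phase V} : MM Vstar X₀ Y → MM Vstar X₀ Z → MM Vstar X₀ (lieB Y Z)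
  | lieX {Y : Phase V → Phase V} : MM Vstar X₀ Y → MM Vstar X₀ (lieB Y X₀)
  | mulS (f : Phase V → ℝ) (hf : ContDiff ℝ (⊤ : ℕ∞) f) {Y : Phase V → Phase V} :
      MM Vstar X₀ Y → MM Vstar X₀ (fun x => f x • Y x)

/-- A vertex `v` is controllable if `∂_{q_v} ∈ 𝓜` and `∂_{p_v} ∈ 𝓜`. -/
def Controllable {V : Type} [Fintype V] [DecidableEq V] (Vstar : Finset V)
    (X₀ : Phase V → Phase V) (v : V) : Prop :=
  MM Vstar X₀ (dq v) ∧ MM Vstar X₀ (dp v)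

/-- Two polynomials are equivalent if `f(·) = g(· + δ)` for some `δ ∈ ℝ`. -/
def PolyEquiv (f g : Polynomial ℝ) : Prop :=
  ∃ δ : ℝ, ∀ x : ℝ, f.eval x = g.eval (x + δ)

/-- The set 𝒯 of neighbors ("targets") of a vertex `c`. -/
def Tset {V : Type} [Fintype V] [DecidableEq V] (G : SimpleGraph V) [DecidableRel G.Adj]
    (c : V) : Finset V :=
  Finset.univ.filter fun w => G.Adj c w

/-- The shift making a polynomial `g = ∑ a_i t^i/i!` of degree `k` adjusted
(i.e. killing the coefficient `a_{k−1}`), namely `a_{k−1}/a_k = coeff_{k−1}/(k·coeff_k)`. -/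
def adjShift (g : Polynomial ℝ) : ℝ :=
  g.coeff (g.natDegree - 1) / ((g.natDegree : ℝ) * g.leadingCoeff)

/-- The adjusted representation `g̃(·) = g(· − a_{k−1}/a_k)` of a polynomial `g`. -/
def adjRep (g : Polynomial ℝ) : Polynomial ℝ :=
  g.comp (Polynomial.X - Polynomial.C (adjShift g))

/-- `f̃_v`, the adjusted representation of `V''_{cv}`. -/
def ft {V : Type} (Vp : V → V → Polynomial ℝ) (c v : V) : Polynomial ℝ :=
  adjRep (derivative (derivative (Vp c v)))

/-- `d = max_{v∈𝒯} d_v`, the maximal degree of the adjusted polynomials `f̃_v`, `v ∈ 𝒯`. -/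
def dmax {V : Type} [Fintype V] [DecidableEq V] (G : SimpleGraph V) [DecidableRel G.Adj]
    (Vp : V → V → Polynomial ℝ) (c : V) : ℕ :=
  (Tset G c).sup fun v => (ft Vp c v).natDegree

/-- `D^d = {v ∈ 𝒯 : d_v = d}`, the neighbors of `c` of maximal adjusted degree. -/
def Dd {V : Type} [Fintype V] [DecidableEq V] (G : SimpleGraph V) [DecidableRel G.Adj]
    (Vp : V → V → Polynomial ℝ) (c : V) : Finset V :=
  (Tset G c).filter fun v => (ft Vp c v).natDegree = dmax G Vp c

/-- The coefficient `b_{vℓ}` in `f̃_v(x) = ∑_j b_{vj} x^j/j!`, i.e. `b_{vℓ} = ℓ!·coeff_ℓ(f̃_v)`. -/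
def bcoef {V : Type} (Vp : V → V → Polynomial ℝ) (c v : V) (ℓ : ℕ) : ℝ :=
  (Nat.factorial ℓ : ℝ) * (ft Vp c v).coeff ℓ

/-- The scalar function `x_v = q_c − q_v + δ_{cv}`, with `δ_{cv}` the adjusting shift
of `V''_{cv}`. -/
def xv {V : Type} [Fintype V] (Vp : V → V → Polynomial ℝ) (c v : V) : Phase V → ℝ :=
  fun x => x.1 c - x.1 v + adjShift (derivative (derivative (Vp c v)))

/-! ### Bracket computations -/

/-- The vector field `∑_v F_v(q_c - q_v + δ_v) ∂_{p_v}` attached to a family of polynomials. -/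
def vf {V : Type} [Fintype V] (δ : V → ℝ) (c : V) (F : V → ℝ[X]) : Phase V → Phase V :=
  fun x => (0, fun v => (F v).eval (x.1 c - x.1 v + δ v))

/-- Computes a Lie bracket from directional derivatives along lines. -/
theorem lieB_of_lines {V : Type} [Fintype V] {Y Z : Phase V → Phase V} {x : Phase V}
    (hY : DifferentiableAt ℝ Y x) (hZ : DifferentiableAt ℝ Z x) {a b : Phase V}
    (ha : HasDerivAt (fun t : ℝ => Z (x + t • Y x)) a 0)
    (hb : HasDerivAt (fun t : ℝ => Y (x + t • Z x)) b 0) :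
    lieB Y Z x = a - b := by
  have h1 : lineDeriv ℝ Z x (Y x) = a := ha.deriv
  have h2 : lineDeriv ℝ Y x (Z x) = b := hb.deriv
  rw [lieB, ← hZ.lineDeriv_eq_fderiv, ← hY.lineDeriv_eq_fderiv, h1, h2]

theorem differentiable_vf {V : Type} [Fintype V] (δ : V → ℝ) (c : V) (F : V → ℝ[X]) :
    Differentiable ℝ (vf δ c F) := by
  refine (differentiable_const _).prodMk (differentiable_pi.2 fun v => ?_)
  exact (F v).differentiable.comp (by fun_prop)

theorem hasDerivAt_vf_line {V : Type} [Fintype V] (δ : V → ℝ) (c : V) (F : V → ℝ[X])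
    (x y : Phase V) :
    HasDerivAt (fun t : ℝ => vf δ c F (x + t • y))
      (0, fun v => (derivative (F v)).eval (x.1 c - x.1 v + δ v) * (y.1 c - y.1 v)) 0 := by
  refine (hasDerivAt_const _ _).prodMk (hasDerivAt_pi.2 fun v => ?_)
  have hl : HasDerivAt (fun t : ℝ => (x + t • y).1 c - (x + t • y).1 v + δ v)
      (y.1 c - y.1 v) 0 := by
    have := (((hasDerivAt_id (0 : ℝ)).mul_const (y.1 c - y.1 v)).const_add
      (x.1 c - x.1 v + δ v))
    simp only [id, one_mul] at this
    refine this.congr_of_eventuallyEq (Filter.Eventually.of_forall fun t => ?_)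
    simp
    ring
  have hp := (F v).hasDerivAt (x.1 c - x.1 v + δ v)
  exact HasDerivAt.comp (h₂ := fun z => (F v).eval z) 0 (by simpa using hp) hl

theorem differentiable_X0 {V : Type} [Fintype V] [DecidableEq V] (G : SimpleGraph V)
    [DecidableRel G.Adj] (γ : V → ℝ) {U : V → ℝ → ℝ} (Vp : V → V → Polynomial ℝ)
    (hU : ∀ v, ContDiff ℝ (⊤ : ℕ∞) (U v)) : Differentiable ℝ (X0 G γ U Vp) := by
  refine differentiable_snd.prodMk (differentiable_pi.2 fun v => ?_)
  have h1 : Differentiable ℝ (deriv (U v)) :=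
    ((contDiff_infty_iff_deriv.1 (hU v)).2).differentiable (by simp)
  have h2 : Differentiable ℝ fun x : Phase V => deriv (U v) (x.1 v) := h1.comp (by fun_prop)
  have h3 : ∀ w, Differentiable ℝ fun x : Phase V =>
      (derivative (Vp v w)).eval (x.1 v - x.1 w) := fun w =>
    (derivative (Vp v w)).differentiable.comp (by fun_prop)
  fun_prop

theorem lieB_vf_X0 {V : Type} [Fintype V] [DecidableEq V] (G : SimpleGraph V)
    [DecidableRel G.Adj] (γ : V → ℝ) {U : V → ℝ → ℝ} (Vp : V → V → Polynomial ℝ)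
    (hU : ∀ v, ContDiff ℝ (⊤ : ℕ∞) (U v)) (δ : V → ℝ) (c : V) (F : V → ℝ[X]) :
    lieB (vf δ c F) (X0 G γ U Vp) = fun x =>
      (fun v => (F v).eval (x.1 c - x.1 v + δ v),
       fun v => -(γ v) * (F v).eval (x.1 c - x.1 v + δ v) -
        (derivative (F v)).eval (x.1 c - x.1 v + δ v) * (x.2 c - x.2 v)) := by
  funext x
  have hX : HasDerivAt (fun t : ℝ => X0 G γ U Vp (x + t • vf δ c F x))
      (fun v => (F v).eval (x.1 c - x.1 v + δ v),
       fun v => -(γ v) * (F v).eval (x.1 c - x.1 v + δ v)) 0 := by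
    -- along a pure momentum direction the drift is affine
    have : (fun t : ℝ => X0 G γ U Vp (x + t • vf δ c F x)) = fun t : ℝ =>
        X0 G γ U Vp x + t • ((fun v => (F v).eval (x.1 c - x.1 v + δ v),
          fun v => -(γ v) * (F v).eval (x.1 c - x.1 v + δ v)) : Phase V) := by
      funext t
      refine Prod.ext ?_ ?_
      · funext v; simp [X0, vf]
      · funext v; simp [X0, vf]; ring
    rw [this]
    simpa using ((hasDerivAt_id (0 : ℝ)).smul_const
      ((fun v => (F v).eval (x.1 c - x.1 v + δ v),
        fun v => -(γ v) * (F v).eval (x.1 c - x.1 v + δ v)) : Phase V)).const_add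
      (X0 G γ U Vp x)
  rw [lieB_of_lines (differentiable_vf δ c F x) (differentiable_X0 G γ Vp hU x) hX
    (hasDerivAt_vf_line δ c F x _)]
  refine Prod.ext ?_ ?_
  · simp
  · funext v; simp [X0]

/-- The product rule for families. Since `F` and `H` vanish at `c`, the field `[vf F, X₀]` does not
move `q_c` and `vf H` does not move `p_c`, so no cross terms between different vertices appear. -/
theorem lieB_lieB_vf {V : Type} [Fintype V] [DecidableEq V] (G : SimpleGraph V)
    [DecidableRel G.Adj] (γ : V → ℝ) {U : V → ℝ → ℝ} (Vp : V → V → Polynomial ℝ)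
    (hU : ∀ v, ContDiff ℝ (⊤ : ℕ∞) (U v)) (δ : V → ℝ) (c : V) (F H : V → ℝ[X])
    (hF : F c = 0) (hH : H c = 0) :
    lieB (lieB (vf δ c F) (X0 G γ U Vp)) (vf δ c H) =
      (-1 : ℝ) • vf δ c (fun v => derivative (F v * H v)) := by
  rw [lieB_vf_X0 G γ Vp hU]
  funext x
  set W : Phase V → Phase V := fun x =>
      (fun v => (F v).eval (x.1 c - x.1 v + δ v),
       fun v => -(γ v) * (F v).eval (x.1 c - x.1 v + δ v) -
        (derivative (F v)).eval (x.1 c - x.1 v + δ v) * (x.2 c - x.2 v)) with hW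
  have hp : ∀ (p : ℝ[X]) (v : V), Differentiable ℝ fun x : Phase V =>
      p.eval (x.1 c - x.1 v + δ v) := fun p v => p.differentiable.comp (by fun_prop)
  have hdW : Differentiable ℝ W := by
    refine (differentiable_pi.2 fun v => hp _ v).prodMk (differentiable_pi.2 fun v => ?_)
    have h1 := hp (F v) v
    have h2 := hp (derivative (F v)) v
    fun_prop
  have hWl : HasDerivAt (fun t : ℝ => W (x + t • vf δ c H x))
      (0, fun v => (derivative (F v)).eval (x.1 c - x.1 v + δ v) *
        (H v).eval (x.1 c - x.1 v + δ v)) 0 := by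
    -- `W` is affine in the momenta
    have : (fun t : ℝ => W (x + t • vf δ c H x)) = fun t : ℝ =>
        W x + t • ((0, fun v => (derivative (F v)).eval (x.1 c - x.1 v + δ v) *
        (H v).eval (x.1 c - x.1 v + δ v)) : Phase V) := by
      funext t
      refine Prod.ext ?_ ?_
      · funext v; simp [hW, vf]
      · funext v; simp [hW, vf, hH]; ring
    rw [this]
    simpa using ((hasDerivAt_id (0 : ℝ)).smul_const
      ((0, fun v => (derivative (F v)).eval (x.1 c - x.1 v + δ v) *
        (H v).eval (x.1 c - x.1 v + δ v)) : Phase V)).const_add (W x)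
  rw [lieB_of_lines (hdW x) (differentiable_vf δ c H x) (hasDerivAt_vf_line δ c H x _) hWl]
  refine Prod.ext ?_ ?_
  · simp [vf]
  · funext v
    simp [hW, vf, hF]
    ring

theorem lieB_dq_vf {V : Type} [Fintype V] [DecidableEq V] (δ : V → ℝ) (c : V) (F : V → ℝ[X])
    (hF : F c = 0) :
    lieB (dq c) (vf δ c F) = vf δ c (fun v => derivative (F v)) := by
  funext x
  have hd : DifferentiableAt ℝ (dq c) x := differentiableAt_const _
  rw [lieB_of_lines hd (differentiable_vf δ c F x) (hasDerivAt_vf_line δ c F x _)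
    (hasDerivAt_const (0 : ℝ) _)]
  refine Prod.ext ?_ ?_
  · simp [vf]
  · funext v
    by_cases h : v = c
    · subst h; simp [vf, hF]
    · simp [vf, dq, h]

/-- The bracket of `∂_{q_c}` with the drift, modulo `∂_{p_c}`, is the field of a family `F` that is
supported on the neighbors of `c` and represents `V''_{cv}` after the shift by `δ_v`. -/
theorem lieB_dq_X0 {V : Type} [Fintype V] [DecidableEq V] (G : SimpleGraph V)
    [DecidableRel G.Adj] (γ : V → ℝ) {U : V → ℝ → ℝ} (Vp : V → V → Polynomial ℝ)
    (hU : ∀ v, ContDiff ℝ (⊤ : ℕ∞) (U v))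
    (hsym : ∀ u v, G.Adj u v → ∀ x : ℝ, (Vp v u).eval x = (Vp u v).eval (-x))
    (δ : V → ℝ) (c : V) (F : V → ℝ[X]) (hF : ∀ v ∉ Tset G c, F v = 0)
    (hF' : ∀ v ∈ Tset G c, ∀ y, (F v).eval (y + δ v) =
      (derivative (derivative (Vp c v))).eval y) :
    lieB (dq c) (X0 G γ U Vp) = vf δ c F + fun x =>
      (-(deriv (deriv (U c)) (x.1 c)) - ∑ w ∈ Finset.univ.filter (fun w => G.Adj c w),
        (derivative (derivative (Vp c w))).eval (x.1 c - x.1 w)) • dp c x := by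
  funext x
  have hd : DifferentiableAt ℝ (dq c) x := differentiableAt_const _
  have hder : HasDerivAt (fun t : ℝ => X0 G γ U Vp (x + t • dq c x))
      (0, fun v => if v = c then
          (-(deriv (deriv (U c)) (x.1 c)) - ∑ w ∈ Finset.univ.filter (fun w => G.Adj c w),
            (derivative (derivative (Vp c w))).eval (x.1 c - x.1 w))
        else (F v).eval (x.1 c - x.1 v + δ v)) 0 := by
    refine HasDerivAt.prodMk ?_ (hasDerivAt_pi.2 fun v => ?_)
    · simpa [dq] using hasDerivAt_const (0 : ℝ) x.2
    by_cases hv : v = c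
    · subst hv
      have hline : HasDerivAt (fun t : ℝ => x.1 v + t) 1 0 := by
        simpa using (hasDerivAt_id (0 : ℝ)).const_add (x.1 v)
      have h1 : HasDerivAt (fun t : ℝ => deriv (U v) (x.1 v + t))
          (deriv (deriv (U v)) (x.1 v)) 0 := by
        have hdd : Differentiable ℝ (deriv (U v)) :=
          ((contDiff_infty_iff_deriv.1 (hU v)).2).differentiable (by simp)
        have h := (hdd (x.1 v)).hasDerivAt
        exact (HasDerivAt.comp (h₂ := deriv (U v)) 0 (by simpa using h) hline).congr_deriv
          (mul_one _)
      have h2 : ∀ w ∈ Finset.univ.filter (fun w => G.Adj v w),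
          HasDerivAt (fun t : ℝ => (derivative (Vp v w)).eval (x.1 v + t - x.1 w))
            ((derivative (derivative (Vp v w))).eval (x.1 v - x.1 w)) 0 := fun w _ => by
        have h := (derivative (Vp v w)).hasDerivAt (x.1 v - x.1 w)
        exact (HasDerivAt.comp (h₂ := fun z => (derivative (Vp v w)).eval z) 0
          (by simpa using h) (hline.sub_const (x.1 w))).congr_deriv (mul_one _)
      have h3 := ((h1.const_sub (-(γ v) * x.2 v))).sub (HasDerivAt.fun_sum h2)
      rw [if_pos rfl]
      refine h3.congr_of_eventuallyEq (Filter.Eventually.of_forall fun t => ?_)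
      simp only [dq, Prod.snd_add, Prod.smul_snd, smul_zero,
        Prod.fst_add, Prod.smul_fst, Pi.add_apply, Pi.smul_apply, Pi.single_eq_same,
        smul_eq_mul, mul_one]
      refine congrArg₂ (· - ·) (by simp) ?_
      refine Finset.sum_congr rfl fun w hw => ?_
      have : w ≠ v := fun h => by simp [h] at hw
      simp [this]
    · rw [if_neg hv]
      have h2 : ∀ w ∈ Finset.univ.filter (fun w => G.Adj v w),
          HasDerivAt (fun t : ℝ => (derivative (Vp v w)).eval
              (x.1 v - (x.1 w + t * (Pi.single c 1 : V → ℝ) w)))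
            (if w = c then -(F v).eval (x.1 c - x.1 v + δ v) else 0) 0 := fun w hw => by
        by_cases hwc : w = c
        · subst hwc
          rw [if_pos rfl]
          have hadj : G.Adj w v := by simpa using (Finset.mem_filter.1 hw).2.symm
          have hcomp : Vp v w = (Vp w v).comp (-X) := by
            refine Polynomial.funext fun y => ?_
            rw [hsym w v hadj, eval_comp]; simp
          have h := (derivative (Vp v w)).hasDerivAt (x.1 v - x.1 w)
          have hl : HasDerivAt (fun t : ℝ => x.1 v - (x.1 w + t * (Pi.single w 1 : V → ℝ) w))
              (-1) 0 := by
            simpa using ((hasDerivAt_id (0 : ℝ)).const_add (x.1 w)).const_sub (x.1 v)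
          have h' := HasDerivAt.comp (h₂ := fun z => (derivative (Vp v w)).eval z) 0
            (by simpa using h) hl
          refine h'.congr_deriv ?_
          rw [hF' v (by simpa [Tset] using hadj), hcomp]
          simp [derivative_comp, eval_comp]
        · simpa [hwc] using hasDerivAt_const (0 : ℝ) _
      have h3 := (HasDerivAt.fun_sum h2).const_sub (-(γ v) * x.2 v - deriv (U v) (x.1 v))
      refine (h3.congr_of_eventuallyEq
        (Filter.Eventually.of_forall fun t => by simp [dq, hv])).congr_deriv ?_
      rw [Finset.sum_ite_eq']
      by_cases hT : G.Adj v c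
      · simp [hT]
      · have : F v = 0 := hF v (by simpa [Tset, G.adj_comm] using hT)
        simp [hT, this]
  rw [lieB_of_lines hd (differentiable_X0 G γ Vp hU x) hder (hasDerivAt_const (0 : ℝ) _)]
  have hFc : F c = 0 := hF c (by simp [Tset])
  refine Prod.ext ?_ ?_
  · simp [vf, dp]
  · funext v
    by_cases h : v = c
    · subst h; simp [vf, dp, hFc]
    · simp [vf, dp, h]

/-! ### Closed families of polynomials -/

/-- A space of families of polynomials that is stable under differentiation and under
`(F, H) ↦ (F H)'`. -/
structure ClosedFamily {V : Type} (L : Submodule ℝ (V → ℝ[X])) : Prop where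
  deriv_mem : ∀ F ∈ L, (fun v => derivative (F v)) ∈ L
  mul_mem : ∀ F ∈ L, ∀ H ∈ L, (fun v => derivative (F v * H v)) ∈ L

/-- The coefficient vectors `a` for which the linear family `(a_v X)_v` belongs to `L`. -/
def linCoeffs {V : Type} (L : Submodule ℝ (V → ℝ[X])) : Submodule ℝ (V → ℝ) where
  carrier := {a | (fun v => C (a v) * X) ∈ L}
  add_mem' {a b} ha hb := by
    have : (fun v => C ((a + b) v) * X) = (fun v => C (a v) * X) + fun v => C (b v) * X := by
      funext v; simp [add_mul]
    simpa only [Set.mem_ofPred_eq, this] using L.add_mem ha hb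
  zero_mem' := by
    have : (fun v => C ((0 : V → ℝ) v) * X) = (0 : V → ℝ[X]) := by funext v; simp
    simpa only [Set.mem_ofPred_eq, this] using L.zero_mem
  smul_mem' r a ha := by
    have : (fun v => C ((r • a) v) * X) = r • (fun v => C (a v) * X) := by
      funext v; simp [mul_assoc, smul_eq_C_mul]
    simpa only [Set.mem_ofPred_eq, this] using L.smul_mem r ha

theorem mem_linCoeffs {V : Type} {L : Submodule ℝ (V → ℝ[X])} {a : V → ℝ} :
    a ∈ linCoeffs L ↔ (fun v => C (a v) * X) ∈ L := Iff.rfl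

namespace ClosedFamily

variable {V : Type} {L : Submodule ℝ (V → ℝ[X])}

theorem iterate_deriv_mem (hL : ClosedFamily L) {F : V → ℝ[X]} (hF : F ∈ L) (n : ℕ) :
    (fun v => derivative^[n] (F v)) ∈ L := by
  induction n with
  | zero => simpa using hF
  | succ n ih => simpa only [Function.iterate_succ_apply'] using hL.deriv_mem _ ih

theorem const_mem (hL : ClosedFamily L) {a : V → ℝ} (ha : a ∈ linCoeffs L) :
    (fun v => C (a v)) ∈ L := by
  simpa using hL.deriv_mem _ (mem_linCoeffs.1 ha)

/-- The operator `g ↦ (a X g)'` is diagonal on coefficients with eigenvalues `a_v (j + 1)`;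
this realizes any polynomial in it. -/
theorem exists_eval_multiplier (hL : ClosedFamily L) {a : V → ℝ} (ha : a ∈ linCoeffs L)
    {g : V → ℝ[X]} (hg : g ∈ L) (q : ℝ[X]) :
    ∃ H ∈ L, ∀ v j, (H v).coeff j = q.eval (a v * (j + 1)) * (g v).coeff j := by
  induction q using Polynomial.induction_on' with
  | add p q hp hq =>
    obtain ⟨P, hP, hP'⟩ := hp
    obtain ⟨Q, hQ, hQ'⟩ := hq
    exact ⟨P + Q, L.add_mem hP hQ, fun v j => by simp [hP', hQ', add_mul]⟩
  | monomial n r =>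
    have key : ∃ H ∈ L, ∀ v j, (H v).coeff j = (a v * (j + 1)) ^ n * (g v).coeff j := by
      induction n with
      | zero => exact ⟨g, hg, by simp⟩
      | succ n ih =>
        obtain ⟨H, hH, hH'⟩ := ih
        refine ⟨_, hL.mul_mem _ (mem_linCoeffs.1 ha) _ hH, fun v j => ?_⟩
        rw [coeff_derivative, mul_assoc, coeff_C_mul, mul_comm X, coeff_mul_X, hH', pow_succ]
        ring
    obtain ⟨H, hH, hH'⟩ := key
    exact ⟨r • H, L.smul_mem r hH, fun v j => by simp [hH', mul_assoc]⟩

/-- By Lagrange interpolation on the finitely many relevant eigenvalues `a_v (j + 1)`, the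
polynomial in `exists_eval_multiplier` may be replaced by an arbitrary function `ψ`. -/
theorem multiplier_mem [Fintype V] (hL : ClosedFamily L) {a : V → ℝ} (ha : a ∈ linCoeffs L)
    {g : V → ℝ[X]} (hg : g ∈ L) (ψ : ℝ → ℝ) {H : V → ℝ[X]}
    (hH : ∀ v j, (H v).coeff j = ψ (a v * (j + 1)) * (g v).coeff j) : H ∈ L := by
  set N := Finset.univ.sup fun v => (g v).natDegree with hN
  set s : Finset ℝ := (Finset.univ ×ˢ Finset.range (N + 1)).image
    fun z : V × ℕ => a z.1 * (z.2 + 1) with hs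
  obtain ⟨P, hP, hP'⟩ := hL.exists_eval_multiplier ha hg (Lagrange.interpolate s id ψ)
  convert hP using 1
  funext v
  ext j
  rw [hH, hP']
  by_cases hj : j ≤ N
  · have hmem : a v * (j + 1) ∈ s :=
      Finset.mem_image.2 ⟨(v, j), by simpa [Nat.lt_succ_iff] using hj, rfl⟩
    have := Lagrange.eval_interpolate_at_node ψ (v := id) (Set.injOn_id _) hmem
    simp only [id] at this
    rw [this]
  · have hle : (g v).natDegree ≤ N :=
      Finset.le_sup (f := fun v => (g v).natDegree) (Finset.mem_univ v)
    rw [coeff_eq_zero_of_natDegree_lt (by omega), mul_zero, mul_zero]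

theorem comp_mem [Fintype V] (hL : ClosedFamily L) {a : V → ℝ} (ha : a ∈ linCoeffs L)
    (φ : ℝ → ℝ) (hφ : φ 0 = 0) : (fun v => φ (a v)) ∈ linCoeffs L := by
  -- on the family `a X` only `j = 1` occurs, with eigenvalue `2 a_v`; if `a_v = 0` both sides vanish
  refine hL.multiplier_mem ha (mem_linCoeffs.1 ha) (fun y => φ (y / 2) / (y / 2)) fun v j => ?_
  rw [coeff_C_mul, coeff_C_mul, coeff_X]
  split_ifs with h
  · subst h
    by_cases h0 : a v = 0
    · simp [h0, hφ]
    · norm_num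
      field_simp
  · simp

theorem mul_mem_linCoeffs (hL : ClosedFamily L) {a b : V → ℝ} (ha : a ∈ linCoeffs L)
    (hb : b ∈ linCoeffs L) : (fun v => a v * b v) ∈ linCoeffs L := by
  have h := L.smul_mem (1 / 2 : ℝ) (hL.mul_mem _ ha _ hb)
  rw [mem_linCoeffs]
  convert h using 1
  funext v
  have : C (a v) * X * (C (b v) * X) = C (a v * b v) * X ^ 2 := by
    rw [C_mul]; ring
  have h2 : C (1 / 2 : ℝ) * C ((2 : ℕ) : ℝ) = 1 := by
    rw [← C_mul]; norm_num
  simp only [Pi.smul_apply, this, derivative_C_mul, derivative_X_pow, smul_eq_C_mul]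
  linear_combination (-(C (a v * b v) * X)) * h2

theorem indicator_multiplier_mem [Fintype V] (hL : ClosedFamily L) {K : Set V}
    (hK : K.indicator 1 ∈ linCoeffs L) {g : V → ℝ[X]} (hg : g ∈ L)
    (ψ : ℕ → ℝ) {H : V → ℝ[X]}
    (hH : ∀ v j, (H v).coeff j = if v ∈ K then ψ j * (g v).coeff j else 0) : H ∈ L := by
  refine hL.multiplier_mem hK hg (fun y => if y = 0 then 0 else ψ (⌊y⌋₊ - 1)) fun v j => ?_
  rw [hH]
  by_cases hv : v ∈ K
  · have h1 : ((j : ℝ) + 1) ≠ 0 := by positivity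
    have h2 : ⌊(j : ℝ) + 1⌋₊ = j + 1 := by exact_mod_cast Nat.floor_natCast (R := ℝ) (j + 1)
    simp [hv, h1, h2]
  · simp [hv]

theorem restrict_mem [Fintype V] (hL : ClosedFamily L) {K : Set V}
    (hK : K.indicator 1 ∈ linCoeffs L) {g : V → ℝ[X]} (hg : g ∈ L) :
    (fun v => if v ∈ K then g v else 0) ∈ L :=
  hL.indicator_multiplier_mem hK hg (fun _ => 1) fun v j => by split_ifs <;> simp

/-- Multiplying by the indicator of `K` removes the condition `φ 0 = 0`, so also the zero level
set of `a` within `K` is obtained. -/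
theorem levelSet_mem [Fintype V] (hL : ClosedFamily L) {K : Set V}
    (hK : K.indicator 1 ∈ linCoeffs L) {a : V → ℝ}
    (ha : a ∈ linCoeffs L) (r : ℝ) :
    {v | v ∈ K ∧ a v = r}.indicator 1 ∈ linCoeffs L := by
  set φ : ℝ → ℝ := fun y => if y = r then 1 else 0 with hφ
  have h1 := hL.comp_mem ha (fun y => φ y - φ 0) (by simp)
  have h2 := (linCoeffs L).add_mem (hL.mul_mem_linCoeffs hK h1)
    ((linCoeffs L).smul_mem (φ 0) hK)
  convert h2 using 1
  funext v
  simp only [Pi.add_apply, Pi.smul_apply, smul_eq_mul, Set.indicator_apply,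
    Set.mem_ofPred_eq, Pi.one_apply]
  by_cases hv : v ∈ K <;> simp [hv, hφ]

/-- The indicators of the sets `{v | n < deg f_v}`, by descending induction on `n`. The hypothesis
`hadj` says that every nonconstant `f_v` has no term of second-highest degree. -/
theorem degree_indicator_mem [Fintype V] (hL : ClosedFamily L) {f : V → ℝ[X]} (hf : f ∈ L)
    (hadj : ∀ v, (f v).coeff ((f v).natDegree - 1) = 0 ∨ (f v).natDegree = 0) (n : ℕ) :
    {v | n < (f v).natDegree}.indicator 1 ∈ linCoeffs L := by
  set N := Finset.univ.sup fun v => (f v).natDegree with hN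
  have hle : ∀ v, (f v).natDegree ≤ N := fun v =>
      Finset.le_sup (f := fun v => (f v).natDegree) (Finset.mem_univ v)
  suffices h : ∀ k n, N ≤ n + k →
      {v | n < (f v).natDegree}.indicator 1 ∈ linCoeffs L from
    h N n (by omega)
  intro k
  induction k with
  | zero =>
    intro n hn
    convert (linCoeffs L).zero_mem using 1
    funext v
    have := hle v
    have hlt : ¬ n < (f v).natDegree := by omega
    simp [hlt]
  | succ k ih =>
    intro n hn
    have hH := ih (n + 1) (by omega)
    -- `g` is `f` with the components of degree above `n + 1` removed
    set g : V → ℝ[X] := fun v => if (f v).natDegree ≤ n + 1 then f v else 0 with hg_def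
    have hg : g ∈ L := by
      convert L.sub_mem hf (hL.restrict_mem hH hf) using 1
      funext v
      by_cases h : (f v).natDegree ≤ n + 1
      · simp [hg_def, h, not_lt.2 h]
      · simp [hg_def, h, not_le.1 h]
    set b : V → ℝ := fun v => ((n + 1).factorial : ℝ) * (g v).coeff (n + 1) with hb
    have hgdeg : ∀ v, (g v).natDegree ≤ n + 1 := fun v => by
      simp only [hg_def]; split_ifs with h
      · exact h
      · simp
    have hform : ∀ v, derivative^[n] (g v) =
        C (b v) * X + C ((n.factorial : ℝ) * (g v).coeff n) := fun v => by
      ext j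
      rw [coeff_iterate_derivative]
      rcases j with _ | _ | j
      · simp [Nat.descFactorial_self]
      · have h2 := Nat.factorial_mul_descFactorial (n := n + 1) (k := n) (by omega)
        simp only [add_tsub_cancel_left, Nat.factorial_one, one_mul] at h2
        simp [hb, add_comm 1 n, coeff_C, h2]
      · rw [coeff_eq_zero_of_natDegree_lt (by have := hgdeg v; omega), coeff_add,
          coeff_C_mul, coeff_X, coeff_C]
        simp
    have hprod : ∀ v, b v * (g v).coeff n = 0 := fun v => by
      by_cases h : (g v).coeff (n + 1) = 0
      · simp [hb, h]
      · have hd : (g v).natDegree = n + 1 :=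
          le_antisymm (hgdeg v) (le_natDegree_of_ne_zero h)
        have hgf : g v = f v := by
          simp only [hg_def] at h ⊢
          split_ifs at h ⊢ with h'
          · rfl
          · simp at h
        rw [hgf] at hd ⊢
        rcases hadj v with h' | h'
        · rw [hd] at h'; simp at h'; simp [h']
        · omega
    have hsq : (fun v => 2 * b v ^ 2) ∈ linCoeffs L := by
      rw [mem_linCoeffs]
      have hd := hL.iterate_deriv_mem hg n
      convert hL.mul_mem _ hd _ hd using 1
      funext v
      have h0 : C (b v) * C ((n.factorial : ℝ) * (g v).coeff n) = 0 := by
        rw [← C_mul, mul_left_comm, hprod, mul_zero, C_0]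
      have : derivative ((C (b v) * X + C ((n.factorial : ℝ) * (g v).coeff n)) *
          (C (b v) * X + C ((n.factorial : ℝ) * (g v).coeff n))) =
          2 * C (b v) ^ 2 * X + 2 * (C (b v) * C ((n.factorial : ℝ) * (g v).coeff n)) := by
        simp only [derivative_mul, derivative_add, derivative_C, derivative_X]
        ring
      rw [hform, this, h0, C_mul, C_pow, C_ofNat]
      ring
    have hK := hL.comp_mem hsq (fun y => if y = 0 then 0 else 1) (by simp)
    convert (linCoeffs L).add_mem hH hK using 1
    funext v
    have hbv : b v = 0 ↔ (f v).natDegree ≠ n + 1 := by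
      simp only [hb, hg_def, mul_eq_zero, Nat.cast_eq_zero, Nat.factorial_ne_zero, false_or]
      split_ifs with h
      · constructor
        · intro h0 h1
          rw [← h1] at h0
          have : f v = 0 := leadingCoeff_eq_zero.1 h0
          simp [this] at h1
        · intro h1
          exact coeff_eq_zero_of_natDegree_lt (by omega)
      · simp; omega
    have h2 : (2 * b v ^ 2 = 0) ↔ (f v).natDegree ≠ n + 1 := by simpa using hbv
    simp only [Set.indicator_apply, Set.mem_ofPred_eq, Pi.add_apply, Pi.one_apply, h2]
    split_ifs <;> first | omega | norm_num

/-- The indicator of the set of vertices carrying the same polynomial as `v₀`. The constant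
coefficient is reached only through its product with the leading one, which is harmless because the
leading coefficient of `f v₀` is nonzero. -/
theorem eq_indicator_mem [Fintype V] (hL : ClosedFamily L) {f : V → ℝ[X]} (hf : f ∈ L)
    (hadj : ∀ v, (f v).coeff ((f v).natDegree - 1) = 0 ∨ (f v).natDegree = 0) (v₀ : V)
    (hv₀ : 1 ≤ (f v₀).natDegree) :
    {v | f v = f v₀}.indicator 1 ∈ linCoeffs L := by
  obtain ⟨n, hn⟩ : ∃ n, (f v₀).natDegree = n + 1 := ⟨_, (Nat.sub_add_cancel hv₀).symm⟩
  set K : Set V := {v | (f v).natDegree = n + 1} with hKdef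
  have hK : K.indicator 1 ∈ linCoeffs L := by
    convert (linCoeffs L).sub_mem (hL.degree_indicator_mem hf hadj n)
      (hL.degree_indicator_mem hf hadj (n + 1)) using 1
    funext v
    simp only [hKdef, Set.indicator_apply, Set.mem_ofPred_eq, Pi.sub_apply, Pi.one_apply]
    split_ifs <;> first | omega | norm_num
  -- homogeneous parts of `f` restricted to `K`
  have hmono : ∀ j, (fun v => if v ∈ K then C ((f v).coeff j) * X ^ j else 0) ∈ L := fun j =>
    hL.indicator_multiplier_mem hK hf (fun i => if i = j then 1 else 0) fun v i => by
      split_ifs with h1 h2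
      · subst h2; simp
      · simp [coeff_X_pow, h2]
      · simp
  have hpos : ∀ j, (fun v => if v ∈ K then ((j + 1).factorial : ℝ) * (f v).coeff (j + 1) else 0)
      ∈ linCoeffs L := fun j => by
    rw [mem_linCoeffs]
    convert hL.iterate_deriv_mem (hmono (j + 1)) j using 1
    funext v
    split_ifs
    · rw [iterate_derivative_C_mul, iterate_derivative_X_pow_eq_smul]
      have h2 := Nat.factorial_mul_descFactorial (n := j + 1) (k := j) (by omega)
      simp only [add_tsub_cancel_left, Nat.factorial_one, one_mul] at h2
      rw [h2, add_tsub_cancel_left, pow_one, smul_eq_C_mul, C_mul]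
      ring
    · simp
  have hzero : (fun v => if v ∈ K then (f v).coeff (n + 1) * (f v).coeff 0 else 0)
      ∈ linCoeffs L := by
    rcases n with _ | n
    -- degree 1: adjustedness makes the constant coefficient vanish
    · convert (linCoeffs L).zero_mem using 1
      funext v
      by_cases hv : v ∈ K
      · have hd : (f v).natDegree = 1 := hv
        rcases hadj v with h | h
        · rw [hd] at h; simp at h; simp [h]
        · omega
      · simp [hv]
    -- degree at least 2: differentiate the product of a quadratic and a constant family
    · have h := hL.mul_mem _ (hL.iterate_deriv_mem (hmono (n + 2)) n) _ (hmono 0)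
      have h' := L.smul_mem (((n + 2).factorial : ℝ)⁻¹) h
      rw [mem_linCoeffs]
      convert h' using 1
      funext v
      simp only [Pi.smul_apply]
      split_ifs
      · rw [iterate_derivative_C_mul, iterate_derivative_X_pow_eq_smul]
        have h2 := Nat.factorial_mul_descFactorial (n := n + 2) (k := n) (by omega)
        simp only [add_tsub_cancel_left, Nat.factorial_two] at h2
        have h3 : ((n + 2).factorial : ℝ) ≠ 0 := by positivity
        have h4 : (((n + 2).descFactorial n : ℕ) : ℝ) = (n + 2).factorial / 2 := by
          rw [← h2]; push_cast; ring
        have h5 : C (((n + 2).factorial : ℝ)⁻¹) * C (((n + 2).factorial : ℝ) / 2) *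
            C ((2 : ℕ) : ℝ) = 1 := by
          rw [← C_mul, ← C_mul, ← C_1]
          congr 1
          field_simp
          norm_num
        rw [h4]
        simp only [add_tsub_cancel_left, pow_zero, mul_one, derivative_mul, derivative_C,
          derivative_X_pow, smul_eq_C_mul, Nat.add_one_sub_one, pow_one, C_mul]
        linear_combination (-(C ((f v).coeff (n + 2)) * C ((f v).coeff 0) * X)) * h5
      · simp
  have hall : ∀ m, {v | v ∈ K ∧ ∀ j < m, (f v).coeff (j + 1) =
      (f v₀).coeff (j + 1)}.indicator 1 ∈ linCoeffs L := fun m => by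
    induction m with
    | zero => simpa using hK
    | succ m ih =>
      convert hL.levelSet_mem ih (hpos m) (((m + 1).factorial : ℝ) * (f v₀).coeff (m + 1))
        using 2
      ext v
      have hfac : ((m + 1).factorial : ℝ) ≠ 0 := by positivity
      simp only [Set.mem_ofPred_eq, Nat.lt_succ_iff_lt_or_eq]
      constructor
      · rintro ⟨h1, h2⟩
        exact ⟨⟨h1, fun j hj => h2 j (Or.inl hj)⟩, by rw [if_pos h1, h2 m (Or.inr rfl)]⟩
      · rintro ⟨⟨h1, h2⟩, h3⟩
        rw [if_pos h1] at h3
        refine ⟨h1, ?_⟩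
        rintro j (hj | rfl)
        · exact h2 j hj
        · exact mul_left_cancel₀ hfac h3
  convert hL.levelSet_mem (hall (n + 1)) hzero ((f v₀).coeff (n + 1) * (f v₀).coeff 0) using 2
  ext v
  simp only [Set.mem_ofPred_eq]
  have hlead : (f v₀).coeff (n + 1) ≠ 0 := by
    rw [← hn]
    exact leadingCoeff_ne_zero.2 fun h => by simp [h] at hn
  constructor
  · intro h
    have hvK : v ∈ K := by simp [hKdef, h, hn]
    exact ⟨⟨hvK, fun j _ => by rw [h]⟩, by rw [if_pos hvK, h]⟩
  · rintro ⟨⟨h1, h2⟩, h3⟩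
    rw [if_pos h1, h2 n (by omega)] at h3
    have hdv : (f v).natDegree = n + 1 := h1
    ext j
    rcases j with _ | j
    · exact mul_left_cancel₀ hlead h3
    · by_cases hj : j < n + 1
      · exact h2 j hj
      · rw [coeff_eq_zero_of_natDegree_lt (by omega), coeff_eq_zero_of_natDegree_lt (by omega)]

end ClosedFamily

/-! ### Adjusted representations -/

/-- Effect of a translation on the coefficient of second-highest degree. -/
theorem coeff_comp_shift (p : ℝ[X]) (r : ℝ) (hp : 1 ≤ p.natDegree) :
    (p.comp (X + C r)).coeff (p.natDegree - 1) =
      p.coeff (p.natDegree - 1) + p.natDegree * r * p.leadingCoeff := by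
  obtain ⟨k, hk⟩ : ∃ k, p.natDegree = k + 1 := ⟨_, (Nat.sub_add_cancel hp).symm⟩
  rw [leadingCoeff, hk, Nat.add_sub_cancel, ← taylor_apply, taylor_coeff]
  have : hasseDeriv k p = C (p.coeff k) + C (((k : ℝ) + 1) * p.coeff (k + 1)) * X := by
    ext j
    rw [hasseDeriv_coeff]
    rcases j with _ | _ | j
    · simp
    · simp [add_comm 1 k, coeff_C]
    · rw [coeff_eq_zero_of_natDegree_lt (by omega), coeff_add, coeff_C_mul, coeff_X, coeff_C]
      simp
  rw [this]
  simp
  ring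

theorem natDegree_adjRep (g : ℝ[X]) : (adjRep g).natDegree = g.natDegree := by
  rw [adjRep, sub_eq_add_neg, ← C_neg, ← taylor_apply, natDegree_taylor]

theorem coeff_adjRep (g : ℝ[X]) (hg : 1 ≤ g.natDegree) :
    (adjRep g).coeff ((adjRep g).natDegree - 1) = 0 := by
  rw [natDegree_adjRep, adjRep, sub_eq_add_neg, ← C_neg, coeff_comp_shift g _ hg, adjShift]
  have h1 : (g.natDegree : ℝ) ≠ 0 := by positivity
  have h2 : g.leadingCoeff ≠ 0 := leadingCoeff_ne_zero.2 fun h => by simp [h] at hg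
  field_simp
  ring

theorem eval_adjRep (g : ℝ[X]) (x : ℝ) : (adjRep g).eval (x + adjShift g) = g.eval x := by
  simp [adjRep, eval_comp]

/-- The adjusted representation is a complete invariant of equivalence: a translate of an adjusted
polynomial is adjusted only if the translation is trivial. -/
theorem polyEquiv_iff_adjRep_eq (f g : ℝ[X]) (hf : 1 ≤ f.natDegree) (hg : 1 ≤ g.natDegree) :
    PolyEquiv f g ↔ adjRep f = adjRep g := by
  constructor
  · rintro ⟨δ, h⟩
    have hshift : adjRep f = (adjRep g).comp (X + C (δ + adjShift g - adjShift f)) := by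
      refine Polynomial.funext fun x => ?_
      have h1 := eval_adjRep f (x - adjShift f)
      rw [sub_add_cancel, h, ← eval_adjRep g] at h1
      rw [h1, eval_comp]
      congr 1
      simp
      ring
    have hdeg : (adjRep f).natDegree = (adjRep g).natDegree := by
      rw [hshift, ← taylor_apply, natDegree_taylor]
    have h1 : 1 ≤ (adjRep g).natDegree := by rwa [natDegree_adjRep]
    have h2 := coeff_comp_shift (adjRep g) (δ + adjShift g - adjShift f) h1
    rw [← hshift, coeff_adjRep g hg, ← hdeg, coeff_adjRep f hf, hdeg, zero_add] at h2
    have h3 : ((adjRep g).natDegree : ℝ) ≠ 0 := by positivity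
    have h4 : (adjRep g).leadingCoeff ≠ 0 :=
      leadingCoeff_ne_zero.2 fun h => by simp [h] at h1
    have h5 : δ + adjShift g - adjShift f = 0 := by
      rcases mul_eq_zero.1 h2.symm with h | h
      · exact (mul_eq_zero.1 h).resolve_left h3
      · exact absurd h h4
    rw [hshift, h5]
    simp
  · intro h
    refine ⟨adjShift f - adjShift g, fun x => ?_⟩
    rw [← eval_adjRep f, ← eval_adjRep g, h]
    congr 1
    ring

/-! ### Families whose field lies in `𝓜` -/

section
variable {V : Type} [Fintype V] [DecidableEq V] {Vstar : Finset V} {X₀ : Phase V → Phase V}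

/-- The space of families `F` with `F_c = 0` whose field `vf δ c F` lies in `𝓜`. The hypothesis on
`∂_{p_c}` only serves to have `0 ∈ 𝓜`. -/
def reach (Vstar : Finset V) (X₀ : Phase V → Phase V) (δ : V → ℝ) (c : V)
    (hc : MM Vstar X₀ (dp c)) : Submodule ℝ (V → ℝ[X]) where
  carrier := {F | F c = 0 ∧ MM Vstar X₀ (vf δ c F)}
  add_mem' {F H} hF hH := ⟨by simp [hF.1, hH.1], by
    convert MM.add hF.2 hH.2 using 1
    funext x
    refine Prod.ext ?_ ?_
    · simp [vf]
    · funext v; simp [vf]⟩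
  zero_mem' := ⟨rfl, by
    convert MM.smul 0 hc using 1
    funext x
    refine Prod.ext ?_ ?_
    · simp [vf]
    · funext v; simp [vf]⟩
  smul_mem' r F hF := ⟨by simp [hF.1], by
    convert MM.smul r hF.2 using 1
    funext x
    refine Prod.ext ?_ ?_
    · simp [vf]
    · funext v; simp [vf]⟩

theorem MM.sub {Y Z : Phase V → Phase V} (hY : MM Vstar X₀ Y) (hZ : MM Vstar X₀ Z) :
    MM Vstar X₀ (Y - Z) := by
  convert MM.add hY (MM.smul (-1) hZ) using 1
  simp [sub_eq_add_neg]

theorem dpSum_apply (A : Finset V) (x : Phase V) :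
    dpSum A x = (0, fun v => if v ∈ A then 1 else 0) := by
  refine Prod.ext rfl ?_
  funext v
  simp [dpSum, Finset.sum_apply, Pi.single_apply]

theorem dpSum_eq_vf (δ : V → ℝ) (c : V) (A : Finset V) :
    dpSum A = vf δ c (fun v => C (if v ∈ A then (1 : ℝ) else 0)) := by
  funext x
  rw [dpSum_apply]
  refine Prod.ext rfl ?_
  funext v
  simp only [vf, eval_C]

theorem dpSum_sdiff (A B : Finset V) : dpSum (A \ B) = dpSum A - dpSum (A ∩ B) := by
  funext x
  rw [Pi.sub_apply, dpSum_apply, dpSum_apply, dpSum_apply]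
  refine Prod.ext (by simp) ?_
  funext v
  by_cases h1 : v ∈ A <;> by_cases h2 : v ∈ B <;> simp [h1, h2]

end

/-- Lemma 5.2. Let `c` be controllable. Then (i) every
equivalence class `𝒯_i^c` of neighbors of `c` (the class of some `v₀ ∈ 𝒯^c`) is
jointly controllable; and (ii) for every such class and every jointly controllable
set `A`, the sets `A ∩ 𝒯_i^c`, `A \ 𝒯_i^c` and `𝒯_i^c \ A` are jointly controllable. -/
theorem class_refinement_jointly_controllable
    {V : Type} [Fintype V] [DecidableEq V] (G : SimpleGraph V) [DecidableRel G.Adj]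
    (Vstar : Finset V) (γ : V → ℝ) (U : V → ℝ → ℝ) (Vp : V → V → Polynomial ℝ)
    (hγpos : ∀ v ∈ Vstar, 0 < γ v) (hγ0 : ∀ v ∉ Vstar, γ v = 0)
    (hU : ∀ v, ContDiff ℝ (⊤ : ℕ∞) (U v))
    (hsym : ∀ u v, G.Adj u v → ∀ x : ℝ, (Vp v u).eval x = (Vp u v).eval (-x))
    (hdeg : ∀ u v, G.Adj u v → 3 ≤ (Vp u v).natDegree)
    (c : V) (hc : Controllable Vstar (X0 G γ U Vp) c) :
    (∀ v₀ ∈ Tset G c,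
      MM Vstar (X0 G γ U Vp)
        (dpSum ((Tset G c).filter fun w =>
          PolyEquiv (derivative (derivative (Vp c w))) (derivative (derivative (Vp c v₀)))))) ∧
    (∀ v₀ ∈ Tset G c, ∀ A : Finset V,
      MM Vstar (X0 G γ U Vp) (dpSum A) →
        MM Vstar (X0 G γ U Vp)
          (dpSum (A ∩ (Tset G c).filter (fun w =>
            PolyEquiv (derivative (derivative (Vp c w))) (derivative (derivative (Vp c v₀)))))) ∧
        MM Vstar (X0 G γ U Vp)
          (dpSum (A \ (Tset G c).filter (fun w =>
            PolyEquiv (derivative (derivative (Vp c w))) (derivative (derivative (Vp c v₀)))))) ∧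
        MM Vstar (X0 G γ U Vp)
          (dpSum ((Tset G c).filter (fun w =>
            PolyEquiv (derivative (derivative (Vp c w))) (derivative (derivative (Vp c v₀)))) \ A))) := by
  set f : V → ℝ[X] := fun v => if v ∈ Tset G c then ft Vp c v else 0 with hfdef
  set δ : V → ℝ := fun v => adjShift (derivative (derivative (Vp c v))) with hδ
  set X₀ := X0 G γ U Vp with hX₀
  set L := reach Vstar X₀ δ c hc.2 with hLdef
  have hL : ClosedFamily L :=
    { deriv_mem := fun F hF => ⟨by simp [hF.1], by
        rw [← lieB_dq_vf δ c F hF.1]; exact MM.lie hc.1 hF.2⟩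
      mul_mem := fun F hF H hH => ⟨by simp [hF.1], by
        have h := MM.smul (-1) (MM.lie (MM.lieX hF.2) hH.2)
        rw [hX₀, lieB_lieB_vf G γ Vp hU δ c F H hF.1 hH.1] at h
        simpa using h⟩ }
  have hcT : c ∉ Tset G c := by simp [Tset]
  have hdeg2 : ∀ v ∈ Tset G c, 1 ≤ (derivative (derivative (Vp c v))).natDegree := fun v hv => by
    have := hdeg c v (by simpa [Tset] using hv)
    rw [natDegree_derivative, natDegree_derivative]
    omega
  have hfL : f ∈ L := by
    refine ⟨by simp [hfdef, hcT], ?_⟩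
    have hbr := lieB_dq_X0 G γ Vp hU hsym δ c f (fun v hv => by simp [hfdef, hv])
      (fun v hv y => by simp only [hfdef, if_pos hv, ft, hδ]; exact eval_adjRep _ y)
    have hsm : ContDiff ℝ (⊤ : ℕ∞) fun x : Phase V =>
        (-(deriv (deriv (U c)) (x.1 c)) - ∑ w ∈ Finset.univ.filter (fun w => G.Adj c w),
          (derivative (derivative (Vp c w))).eval (x.1 c - x.1 w)) := by
      have h1 : ContDiff ℝ (⊤ : ℕ∞) (deriv (deriv (U c))) :=
        (contDiff_infty_iff_deriv.1 (contDiff_infty_iff_deriv.1 (hU c)).2).2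
      have h2 : ContDiff ℝ (⊤ : ℕ∞) fun x : Phase V => deriv (deriv (U c)) (x.1 c) :=
        h1.comp (by fun_prop)
      refine h2.neg.sub (ContDiff.sum fun w _ => ?_)
      have h3 : ContDiff ℝ (⊤ : ℕ∞) fun y : ℝ => (derivative (derivative (Vp c w))).eval y := by
        simpa using (derivative (derivative (Vp c w))).contDiff_aeval (𝕜 := ℝ) (⊤ : ℕ∞)
      exact h3.comp (by fun_prop)
    have h := (MM.lieX (X₀ := X₀) hc.1).sub (MM.mulS _ hsm hc.2)
    rw [hX₀, hbr, add_sub_cancel_right] at h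
    exact h
  have hadj : ∀ v, (f v).coeff ((f v).natDegree - 1) = 0 ∨ (f v).natDegree = 0 := fun v => by
    by_cases hv : v ∈ Tset G c
    · left
      simp only [hfdef, if_pos hv]
      exact coeff_adjRep _ (hdeg2 v hv)
    · right; simp [hfdef, hv]
  have hclass : ∀ v₀ ∈ Tset G c, (fun v => if v ∈ (Tset G c).filter (fun w =>
      PolyEquiv (derivative (derivative (Vp c w))) (derivative (derivative (Vp c v₀))))
      then (1 : ℝ) else 0) ∈ linCoeffs L := fun v₀ hv₀ => by
    have hd0 : 1 ≤ (f v₀).natDegree := by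
      simp only [hfdef, if_pos hv₀, ft, natDegree_adjRep]
      exact hdeg2 v₀ hv₀
    convert hL.eq_indicator_mem hfL hadj v₀ hd0 using 1
    funext v
    rw [Set.indicator_apply]
    refine if_congr ?_ rfl rfl
    rw [Finset.mem_filter, Set.mem_ofPred_eq]
    by_cases hv : v ∈ Tset G c
    · simp only [hfdef, if_pos hv, if_pos hv₀, ft, hv, true_and]
      exact polyEquiv_iff_adjRep_eq _ _ (hdeg2 v hv) (hdeg2 v₀ hv₀)
    · simp only [hv, false_and, false_iff]
      intro h
      rw [← h] at hd0
      simp [hfdef, hv] at hd0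
  have hone : ∀ v₀ ∈ Tset G c, MM Vstar X₀ (dpSum ((Tset G c).filter fun w =>
      PolyEquiv (derivative (derivative (Vp c w))) (derivative (derivative (Vp c v₀))))) :=
    fun v₀ hv₀ => by
      rw [dpSum_eq_vf δ c]
      exact (hL.const_mem (hclass v₀ hv₀)).2
  refine ⟨hone, fun v₀ hv₀ A hA => ?_⟩
  have hclass₀ := hclass v₀ hv₀
  have hone₀ := hone v₀ hv₀
  set K := (Tset G c).filter fun w =>
      PolyEquiv (derivative (derivative (Vp c w))) (derivative (derivative (Vp c v₀))) with hK
  have hcK : c ∉ K := fun h => hcT (Finset.mem_filter.1 h).1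
  -- `c` is removed from `A` so that the product rule applies; this does not affect `A ∩ K`
  have hAc : (fun v => C (if v ∈ A \ {c} then (1 : ℝ) else 0)) ∈ L := by
    refine ⟨by simp, ?_⟩
    rw [← dpSum_eq_vf, dpSum_sdiff]
    refine hA.sub ?_
    by_cases h : c ∈ A
    · have h1 : dpSum (A ∩ {c}) = dp c := by
        rw [Finset.inter_singleton_of_mem h]; funext x; simp [dpSum, dp]
      rw [h1]; exact hc.2
    · have h1 : dpSum (A ∩ {c}) = (0 : ℝ) • dp c := by
        rw [Finset.inter_singleton_of_notMem h]; funext x; simp [dpSum, Prod.zero_eq_mk]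
      rw [h1]; exact MM.smul 0 hc.2
  have hinter : MM Vstar X₀ (dpSum (A ∩ K)) := by
    rw [dpSum_eq_vf δ c]
    convert (hL.mul_mem _ (mem_linCoeffs.1 hclass₀) _ hAc).2 using 2
    funext v
    by_cases hvK : v ∈ K
    · have hvc : v ≠ c := fun h => hcK (h ▸ hvK)
      by_cases hvA : v ∈ A <;> simp [hvK, hvc, hvA]
    · simp [hvK]
  refine ⟨hinter, ?_, ?_⟩
  · rw [dpSum_sdiff]; exact hA.sub hinter
  · rw [dpSum_sdiff, Finset.inter_comm]; exact hone₀.sub hinter
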